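/- arXiv:1906.01773 — 2 statements merged into one kernel-verified Lean document; each statement's English description precedes it below -/
import Mathlib

section
/- There exists a polyomino M — a finite, edge-connected set of exactly 100 unit cells of ℤ² — such that ℤ² can be partitioned into translates of M, and the adjacency graph of this tessellation (whose vertices are the translates of M, with two translates adjacent if and only if some cell of one is edge-adjacent to a cell of the other) is isomorphic to the triangular grid graph G_Δ; in particular, every macrotile in the tessellation has exactly six neighbors, arranged as the neighborhood of a node in G_Δ. -/
/-!
There is a 100-cell polyomino whose translates tessellate `ℤ²` with tessellation
adjacency graph isomorphic to the triangular grid graph `G_Δ`.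
-/

/-- Edge-adjacency of unit cells of `ℤ²`. -/
def cellAdj (c d : ℤ × ℤ) : Prop :=
  c - d ∈ ({(1, 0), (-1, 0), (0, 1), (0, -1)} : Finset (ℤ × ℤ))

/-- Adjacency in the triangular grid graph `G_Δ` on `ℤ²`. -/
def triAdj (u v : ℤ × ℤ) : Prop :=
  u - v ∈ ({(1, 0), (-1, 0), (0, 1), (0, -1), (1, -1), (-1, 1)} : Finset (ℤ × ℤ))

/-- A polyomino: a nonempty finite set of cells, connected under edge-adjacency. -/
def IsPolyomino (M : Finset (ℤ × ℤ)) : Prop :=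
  M.Nonempty ∧ ∀ c ∈ M, ∀ d ∈ M,
    Relation.ReflTransGen (fun x y => x ∈ M ∧ y ∈ M ∧ cellAdj x y) c d

/-!
Rectangular bricks laid in running bond do the job: a brick touches its two neighbours in its own
course, two bricks in the course above and two in the course below. Since placement is additive,
whether two bricks touch depends only on the difference `e` of their indices, and since the
differences of cells of an `m × n` rectangle form the box `|x| < m`, `|y| < n`, they touch exactly
when this box contains `u - brickPos m n s e` for some unit vector `u`.
-/

theorem reflTransGen_of_ordConnected_int {α : Type*} {r : α → α → Prop} {s : Set ℤ}
    (hs : s.OrdConnected) {f : ℤ → α}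
    (hr : ∀ i ∈ s, i + 1 ∈ s → r (f i) (f (i + 1)) ∧ r (f (i + 1)) (f i))
    {x y : ℤ} (hx : x ∈ s) (hy : y ∈ s) : Relation.ReflTransGen r (f x) (f y) := by
  have step_mem {a b i : ℤ} (ha : a ∈ s) (hb : b ∈ s) (hi : i ∈ Set.Ico a b) :
      i ∈ s ∧ i + 1 ∈ s :=
    ⟨hs.out ha hb ⟨hi.1, hi.2.le⟩, hs.out ha hb ⟨hi.1.trans (lt_add_one i).le, hi.2⟩⟩
  have path : Relation.ReflTransGen (fun i j ↦ r (f i) (f j)) x y :=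
    reflTransGen_of_succ _
      (fun i hi ↦ (hr i (step_mem hx hy hi).1 (step_mem hx hy hi).2).1)
      (fun i hi ↦ (hr i (step_mem hy hx hi).1 (step_mem hy hx hi).2).2)
  exact path.lift f (fun _ _ h ↦ h)

theorem isPolyomino_product {s t : Finset ℤ} (hs : (s : Set ℤ).OrdConnected)
    (ht : (t : Set ℤ).OrdConnected) (hs₀ : s.Nonempty) (ht₀ : t.Nonempty) :
    IsPolyomino (s ×ˢ t) := by
  refine ⟨hs₀.product ht₀, ?_⟩
  rintro ⟨x, y⟩ hc ⟨x', y'⟩ hd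
  obtain ⟨hx, hy⟩ := Finset.mem_product.mp hc
  obtain ⟨hx', hy'⟩ := Finset.mem_product.mp hd
  let step (c d : ℤ × ℤ) : Prop := c ∈ s ×ˢ t ∧ d ∈ s ×ˢ t ∧ cellAdj c d
  have horizontal : Relation.ReflTransGen step (x, y) (x', y) :=
    reflTransGen_of_ordConnected_int hs (f := (·, y))
      (fun i hi hi' ↦ by simp_all [step, cellAdj]) hx hx'
  have vertical : Relation.ReflTransGen step (x', y) (x', y') :=
    reflTransGen_of_ordConnected_int ht (f := (x', ·))
      (fun i hi hi' ↦ by simp_all [step, cellAdj]) hy hy'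
  exact horizontal.trans vertical

/-- The `m × n` rectangular macrotile with lower left cell at the origin; it is empty unless
`m` and `n` are positive. -/
noncomputable def brick (m n : ℤ) : Finset (ℤ × ℤ) :=
  Finset.Ico 0 m ×ˢ Finset.Ico 0 n

/-- The placement of `m × n` bricks in running bond: `v.2` numbers the courses, `v.1` the bricks
within a course, and every course is shifted by `s` cells to the right of the one below it. -/
def brickPos (m n s : ℤ) (v : ℤ × ℤ) : ℤ × ℤ :=
  (m * v.1 + s * v.2, n * v.2)

variable {m n s : ℤ}

theorem card_brick (m n : ℤ) : (brick m n).card = m.toNat * n.toNat := by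
  simp [brick]

theorem isPolyomino_brick (hm : 0 < m) (hn : 0 < n) : IsPolyomino (brick m n) :=
  isPolyomino_product (by simpa using Set.ordConnected_Ico) (by simpa using Set.ordConnected_Ico)
    (by simpa using hm) (by simpa using hn)

theorem sub_mul_mem_Ico_iff_eq_ediv (hm : 0 < m) (x q : ℤ) :
    x - m * q ∈ Finset.Ico 0 m ↔ q = x / m := by
  rw [Finset.mem_Ico, eq_comm (a := q), Int.ediv_eq_iff_of_pos hm]
  constructor <;> rintro ⟨_, _⟩ <;> constructor <;> linarith

theorem existsUnique_mem_brickPos_add_brick (hm : 0 < m) (hn : 0 < n) (s : ℤ) (x : ℤ × ℤ) :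
    ∃! v, ∃ c ∈ brick m n, x = brickPos m n s v + c := by
  have covers_iff (v : ℤ × ℤ) : (∃ c ∈ brick m n, x = brickPos m n s v + c) ↔
      v.1 = (x.1 - s * v.2) / m ∧ v.2 = x.2 / n := by
    calc (∃ c ∈ brick m n, x = brickPos m n s v + c)
      _ ↔ x - brickPos m n s v ∈ brick m n := by simp [← sub_eq_iff_eq_add']
      _ ↔ x.1 - s * v.2 - m * v.1 ∈ Finset.Ico 0 m ∧ x.2 - n * v.2 ∈ Finset.Ico 0 n := by
        rw [brick, Finset.mem_product, brickPos, Prod.fst_sub, Prod.snd_sub, sub_sub, add_comm]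
      _ ↔ _ := by rw [sub_mul_mem_Ico_iff_eq_ediv hm, sub_mul_mem_Ico_iff_eq_ediv hn]
  simp only [covers_iff]
  exact ⟨((x.1 - s * (x.2 / n)) / m, x.2 / n), ⟨rfl, rfl⟩,
    fun v ⟨h₁, h₂⟩ ↦ Prod.ext (h₂ ▸ h₁) h₂⟩

theorem exists_mem_Ico_sub_eq_iff_abs_lt (i : ℤ) :
    (∃ a ∈ Finset.Ico 0 n, ∃ b ∈ Finset.Ico 0 n, a - b = i) ↔ |i| < n := by
  simp only [Finset.mem_Ico]
  constructor
  · rintro ⟨a, ha, b, hb, rfl⟩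
    rw [abs_lt]
    omega
  · intro hi
    rw [abs_lt] at hi
    exact ⟨max i 0, by omega, max (-i) 0, by omega, by omega⟩

theorem exists_mem_brick_sub_eq_iff (e : ℤ × ℤ) :
    (∃ c ∈ brick m n, ∃ d ∈ brick m n, c - d = e) ↔ |e.1| < m ∧ |e.2| < n := by
  rw [← exists_mem_Ico_sub_eq_iff_abs_lt, ← exists_mem_Ico_sub_eq_iff_abs_lt]
  simp only [brick, Finset.mem_product, Prod.exists, Prod.ext_iff, Prod.fst_sub, Prod.snd_sub]
  constructor
  · rintro ⟨a, b, ⟨ha, hb⟩, a', b', ⟨ha', hb'⟩, h₁, h₂⟩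
    exact ⟨⟨a, ha, a', ha', h₁⟩, b, hb, b', hb', h₂⟩
  · rintro ⟨⟨a, ha, a', ha', h₁⟩, b, hb, b', hb', h₂⟩
    exact ⟨a, b, ⟨ha, hb⟩, a', b', ⟨ha', hb'⟩, h₁, h₂⟩

theorem brickPos_sub (v w : ℤ × ℤ) :
    brickPos m n s v - brickPos m n s w = brickPos m n s (v - w) := by
  ext <;> simp only [brickPos, Prod.fst_sub, Prod.snd_sub] <;> ring

theorem exists_cellAdj_brick_iff (p q : ℤ × ℤ) :
    (∃ c ∈ brick m n, ∃ d ∈ brick m n, cellAdj (p + c) (q + d)) ↔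
      ∃ u : ℤ × ℤ, cellAdj u 0 ∧ |u.1 - (p - q).1| < m ∧ |u.2 - (p - q).2| < n := by
  have adj_iff (c d : ℤ × ℤ) : cellAdj (p + c) (q + d) ↔ cellAdj (p - q + (c - d)) 0 := by
    rw [cellAdj, cellAdj, sub_zero, add_sub_add_comm]
  simp only [adj_iff, ← Prod.fst_sub, ← Prod.snd_sub, ← exists_mem_brick_sub_eq_iff]
  constructor
  · rintro ⟨c, hc, d, hd, h⟩
    exact ⟨_, h, c, hc, d, hd, (add_sub_cancel_left _ _).symm⟩
  · rintro ⟨u, h, c, hc, d, hd, hcd⟩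
    exact ⟨c, hc, d, hd, by rwa [hcd, add_sub_cancel]⟩

theorem abs_lt_of_abs_mul_lt_mul {R : Type*} [Ring R] [LinearOrder R] [IsStrictOrderedRing R]
    {a b k : R} (ha : 0 < a) (h : |a * b| < a * k) : |b| < k := by
  rwa [abs_mul, abs_of_pos ha, mul_lt_mul_iff_right₀ ha] at h

theorem exists_cellAdj_zero_abs_sub_brickPos_lt_iff (hs : 0 < s) (hsm : s < m) (hn : 0 < n)
    {e : ℤ × ℤ} (he : e ≠ 0) :
    (∃ u : ℤ × ℤ, cellAdj u 0 ∧
        |u.1 - (brickPos m n s e).1| < m ∧ |u.2 - (brickPos m n s e).2| < n) ↔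
      triAdj e 0 := by
  obtain ⟨i, j⟩ := e
  simp only [cellAdj, triAdj, brickPos, sub_zero, Finset.mem_insert, Finset.mem_singleton,
    or_and_right, exists_or, exists_eq_left, Prod.mk.injEq, ne_eq,
    Prod.mk_eq_zero, abs_lt] at he ⊢
  constructor
  · intro h
    -- A unit vector has coordinates at most 1, so `|n * j| < n + 1`; it is vertical if `j ≠ 0`,
    -- and then `|m * i| < m + s`.
    have hj : |j| < 2 := abs_lt_of_abs_mul_lt_mul hn (by rw [abs_lt]; omega)
    obtain ⟨_, _⟩ := abs_lt.mp hj
    have hi : |i| < 2 :=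
      abs_lt_of_abs_mul_lt_mul (hs.trans hsm) (by rw [abs_lt]; interval_cases j <;> omega)
    obtain ⟨_, _⟩ := abs_lt.mp hi
    interval_cases i <;> interval_cases j <;> omega
  · rintro (⟨rfl, rfl⟩ | ⟨rfl, rfl⟩ | ⟨rfl, rfl⟩ | ⟨rfl, rfl⟩ | ⟨rfl, rfl⟩ | ⟨rfl, rfl⟩) <;> omega

theorem exists_cellAdj_brickPos_add_brick_iff_triAdj (hs : 0 < s) (hsm : s < m) (hn : 0 < n)
    {v w : ℤ × ℤ} (hvw : v ≠ w) :
    (∃ c ∈ brick m n, ∃ d ∈ brick m n,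
      cellAdj (brickPos m n s v + c) (brickPos m n s w + d)) ↔ triAdj v w := by
  rw [exists_cellAdj_brick_iff, brickPos_sub,
    exists_cellAdj_zero_abs_sub_brickPos_lt_iff hs hsm hn (sub_ne_zero.mpr hvw), triAdj, triAdj,
    sub_zero]

theorem exists_100_cell_macrotile_tessellation_triangular_general
    (hs : 0 < s) (hsm : s < m) (hn : 0 < n) :
    (brick m n).card = m.toNat * n.toNat ∧ IsPolyomino (brick m n) ∧
      (∀ x : ℤ × ℤ, ∃! v : ℤ × ℤ, ∃ c ∈ brick m n, x = brickPos m n s v + c) ∧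
      ∀ v w : ℤ × ℤ, v ≠ w →
        ((∃ c ∈ brick m n, ∃ d ∈ brick m n,
          cellAdj (brickPos m n s v + c) (brickPos m n s w + d)) ↔ triAdj v w) :=
  have hm : 0 < m := hs.trans hsm
  ⟨card_brick m n, isPolyomino_brick hm hn, existsUnique_mem_brickPos_add_brick hm hn s,
    fun _ _ ↦ exists_cellAdj_brickPos_add_brick_iff_triAdj hs hsm hn⟩

/-- There exists a polyomino `M` of exactly 100 cells together with a placement
`pos : ℤ² → ℤ²` of one translate of `M` for each node of `G_Δ` such that the
translates partition `ℤ²` and two distinct translates contain edge-adjacent cells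
exactly when the corresponding nodes are adjacent in `G_Δ`; in particular every
macrotile of the tessellation has exactly six neighbors, arranged as the
neighborhood of a node of `G_Δ`. -/
theorem exists_100_cell_macrotile_tessellation_triangular :
    ∃ (M : Finset (ℤ × ℤ)) (pos : ℤ × ℤ → ℤ × ℤ),
      M.card = 100 ∧ IsPolyomino M ∧
      -- the translates `pos v + M` partition `ℤ²`
      (∀ x : ℤ × ℤ, ∃! v : ℤ × ℤ, ∃ c ∈ M, x = pos v + c) ∧
      -- the adjacency graph of the tessellation is (via the indexing `v ↦ pos v + M`)
      -- isomorphic to the triangular grid graph `G_Δ`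
      (∀ v w : ℤ × ℤ, v ≠ w →
        ((∃ c ∈ M, ∃ d ∈ M, cellAdj (pos v + c) (pos w + d)) ↔ triAdj v w)) :=
  ⟨brick 10 10, brickPos 10 10 5,
    exists_100_cell_macrotile_tessellation_triangular_general (by simp) (by simp) (by simp)⟩
end

section
/- Let τ be a positive integer and let G be a finite graph with nonnegative integer edge weights whose vertex set is partitioned into nonempty sets A and B such that: (i) every bipartition of A into two nonempty parts has total weight of A-internal edges crossing it at least τ; (ii) the same holds for B; and (iii) the total weight of edges between A and B is at least τ. Then every bipartition of the vertex set of G into two nonempty parts has total crossing edge weight at least τ, i.e., G has min-cut at least τ. Consequently, in the Tile Automata model, if two τ-stable assemblies are τ-combinable into an assembly C, then C is τ-stable. -/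
namespace TA

/-- A positioned assembly: a finitely supported partial placement of tile states
on the square lattice `ℤ²`. -/
structure PosAsm (S : Type) where
  tiles : ℤ × ℤ → Option S
  finite : {x : ℤ × ℤ | tiles x ≠ none}.Finite

/-- The domain (set of occupied positions) of a positioned assembly. -/
def dom {S : Type} (α : PosAsm S) : Set (ℤ × ℤ) := {x | α.tiles x ≠ none}

/-- A Tile Automata system `Γ = (Σ_Γ, Π, Λ, Δ, τ)` over an alphabet `S` of tile
states.  `aff s₁ s₂ true` is the affinity strength of `s₁` immediately to the west
of `s₂` (orientation `⊢`), `aff s₁ s₂ false` that of `s₁` immediately above `s₂`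
(orientation `⊥`).  `rules` is the set of transition rules
`(s₁ᵃ, s₂ᵃ, s₁ᵇ, s₂ᵇ, d)`, `seeds` the set of initial assemblies and `τ` the
stability threshold. -/
structure System (S : Type) where
  aff : S → S → Bool → ℕ
  rules : Set (S × S × S × S × Bool)
  seeds : Set (PosAsm S)
  τ : ℕ

variable {S : Type}

/-- The weight in the bond graph of `α` of the edge between positions `u` and `v`
(`0` unless both are occupied and adjacent). -/
def edgeW (Γ : System S) (α : PosAsm S) (u v : ℤ × ℤ) : ℕ :=
  match α.tiles u, α.tiles v with
  | some a, some b =>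
    if v = u + (1, 0) then Γ.aff a b true
    else if u = v + (1, 0) then Γ.aff b a true
    else if u = v + (0, 1) then Γ.aff a b false
    else if v = u + (0, 1) then Γ.aff b a false
    else 0
  | _, _ => 0

/-- The total strength of the bonds of `α` crossing from `A` to `B`. -/
noncomputable def crossW (Γ : System S) (α : PosAsm S) (A B : Set (ℤ × ℤ)) : ℕ :=
  ∑ᶠ u ∈ A, ∑ᶠ v ∈ B, edgeW Γ α u v

/-- `α` is `τ`-stable: every bipartition of its tiles has crossing bond strength
at least `τ` (its bond graph has min-cut at least `τ`). -/
def Stable (Γ : System S) (α : PosAsm S) : Prop :=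
  ∀ X : Set (ℤ × ℤ), (dom α ∩ X).Nonempty → (dom α \ X).Nonempty →
    Γ.τ ≤ crossW Γ α X Xᶜ

/-- The union of two positioned assemblies (used for disjoint domains). -/
def union (α β : PosAsm S) : PosAsm S where
  tiles x := match α.tiles x with
    | some a => some a
    | none => β.tiles x
  finite := by
    apply (α.finite.union β.finite).subset
    intro x hx
    simp only [Set.mem_setOf_eq, Set.mem_union]
    by_cases h : α.tiles x = none
    · right
      simp only [Set.mem_setOf_eq, h] at hx
      exact hx
    · exact Or.inl h

/-- Grid (edge) adjacency on `ℤ²`. -/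
def gridAdj (u v : ℤ × ℤ) : Prop :=
  v - u ∈ ({(1, 0), (-1, 0), (0, 1), (0, -1)} : Finset (ℤ × ℤ))

/-- A positioned assembly is connected (as required of assemblies). -/
def IsConnected (α : PosAsm S) : Prop :=
  ∀ u ∈ dom α, ∀ v ∈ dom α,
    Relation.ReflTransGen (fun x y => x ∈ dom α ∧ y ∈ dom α ∧ gridAdj x y) u v

/-- `α` and `β` are `τ`-combinable into `γ`: they have disjoint domains, `γ` is
their union, and they attach along a border of total affinity strength at least `τ`. -/
def Combines (Γ : System S) (α β γ : PosAsm S) : Prop :=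
  Disjoint (dom α) (dom β) ∧ γ = union α β ∧
    Γ.τ ≤ crossW Γ γ (dom α) (dom β)

/-- `γ` is `τ`-breakable into the pieces `α` and `β`: it splits along a cut of
total affinity strength less than `τ`. -/
def BreaksInto (Γ : System S) (γ α β : PosAsm S) : Prop :=
  Disjoint (dom α) (dom β) ∧ γ = union α β ∧
    (dom α).Nonempty ∧ (dom β).Nonempty ∧
    crossW Γ γ (dom α) (dom β) < Γ.τ

/-- `α` is transitionable into `β`: some adjacent pair of tiles matches a
transition rule, whose output states replace them. -/
def Transitions (Γ : System S) (α β : PosAsm S) : Prop :=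
  ∃ (u v : ℤ × ℤ) (a b c d : S) (horiz : Bool),
    ((horiz = true ∧ v = u + (1, 0)) ∨ (horiz = false ∧ v = u + (0, -1))) ∧
    α.tiles u = some a ∧ α.tiles v = some b ∧
    (a, b, c, d, horiz) ∈ Γ.rules ∧
    β.tiles = Function.update (Function.update α.tiles u (some c)) v (some d)

/-- Translation of a positioned assembly. -/
def translate (t : ℤ × ℤ) (α : PosAsm S) : PosAsm S where
  tiles x := α.tiles (x - t)
  finite := by
    apply (α.finite.image (fun y => y + t)).subset
    intro x hx
    exact ⟨x - t, hx, by ring⟩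

/-- The producible assemblies of a Tile Automata system: generated from the
initial assemblies (closed under translation) by transitions, `τ`-combinations
and `τ`-breaks. -/
inductive Producible (Γ : System S) : PosAsm S → Prop
  | seed {α : PosAsm S} : α ∈ Γ.seeds → Producible Γ α
  | translate {α : PosAsm S} (t : ℤ × ℤ) : Producible Γ α → Producible Γ (TA.translate t α)
  | transition {α β : PosAsm S} : Producible Γ α → Transitions Γ α β → Producible Γ β
  | combine {α β γ : PosAsm S} :
      Producible Γ α → Producible Γ β → Combines Γ α β γ → Producible Γ γ
  | breakL {γ α β : PosAsm S} : Producible Γ γ → BreaksInto Γ γ α β → Producible Γ α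
  | breakR {γ α β : PosAsm S} : Producible Γ γ → BreaksInto Γ γ α β → Producible Γ β

/-- One step of `Γ`: a single transition, combination with a producible assembly,
or break. -/
def Step (Γ : System S) (α β : PosAsm S) : Prop :=
  Transitions Γ α β ∨
    (∃ δ, Producible Γ δ ∧ (Combines Γ α δ β ∨ Combines Γ δ α β)) ∨
    (∃ δ, BreaksInto Γ α β δ ∨ BreaksInto Γ α δ β)

/-- `α →^Γ β`: `α` may become `β` through a sequence of combinations, transitions
and/or breaks. -/
def StepsTo (Γ : System S) : PosAsm S → PosAsm S → Prop :=
  Relation.ReflTransGen (Step Γ)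

end TA



/-- The graph-theoretic claim: if the vertex set of a finite graph with
nonnegative integer edge weights `w` is partitioned into nonempty sets `A` and
`B` such that every bipartition of `A` has `A`-internal crossing weight at least
`τ`, likewise for `B`, and the total weight between `A` and `B` is at least `τ`,
then every bipartition of the whole vertex set has crossing weight at least `τ`,
i.e. the graph has min-cut at least `τ`. -/
def GraphMinCutOfPartitionClaim : Prop :=
  ∀ (V : Type) [Fintype V] [DecidableEq V] (τ : ℕ), 0 < τ →
    ∀ w : V → V → ℕ, (∀ u v : V, w u v = w v u) →
    ∀ A B : Finset V, A.Nonempty → B.Nonempty → Disjoint A B → A ∪ B = Finset.univ →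
    (∀ X ⊆ A, X.Nonempty → (A \ X).Nonempty → τ ≤ ∑ u ∈ X, ∑ v ∈ A \ X, w u v) →
    (∀ X ⊆ B, X.Nonempty → (B \ X).Nonempty → τ ≤ ∑ u ∈ X, ∑ v ∈ B \ X, w u v) →
    τ ≤ (∑ u ∈ A, ∑ v ∈ B, w u v) →
    ∀ X : Finset V, X.Nonempty → Xᶜ.Nonempty → τ ≤ ∑ u ∈ X, ∑ v ∈ Xᶜ, w u v

/-- The consequence in the Tile Automata model: if two `τ`-stable assemblies are
`τ`-combinable into an assembly `C`, then `C` is `τ`-stable. -/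
def CombinableStableClaim : Prop :=
  ∀ (S : Type) (Γ : TA.System S), 0 < Γ.τ →
    ∀ α β γ : TA.PosAsm S,
      TA.Stable Γ α → TA.Stable Γ β → TA.Combines Γ α β γ → TA.Stable Γ γ

/-!
Weights are nonnegative, so a cut of `A ∪ B` that splits one of the two parts weighs at least as
much as the cut it induces on that part. A cut that splits neither part has `A` on one side and `B`
on the other, so all edges between `A` and `B` cross it.
-/

section WeightedGraph

variable {V M : Type*} [AddCommMonoid M]

/-- The total weight of the edges from `X` to `Y` in the graph with edge weights `w`, where weight
`0` encodes the absence of an edge. -/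
def cutWeight (w : V → V → M) (X Y : Finset V) : M :=
  ∑ u ∈ X, ∑ v ∈ Y, w u v

/-- The subgraph induced on `C` has min-cut at least `τ`. No symmetry of `w` is built in: the edges
counted are those leaving `X`, and the two directions of a cut are covered by `X` and `C \ X`. -/
def MinCutAtLeast [LE M] [DecidableEq V] (w : V → V → M) (τ : M) (C : Finset V) : Prop :=
  ∀ X ⊆ C, X.Nonempty → (C \ X).Nonempty → τ ≤ cutWeight w X (C \ X)

theorem cutWeight_comm {w : V → V → M} (hw : ∀ u v, w u v = w v u) (X Y : Finset V) :
    cutWeight w X Y = cutWeight w Y X :=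
  Finset.sum_comm.trans <|
    Finset.sum_congr rfl fun v _ => Finset.sum_congr rfl fun u _ => hw u v

variable [PartialOrder M] [CanonicallyOrderedAdd M]
  {w : V → V → M} {τ : M} {A B C X X' Y Y' : Finset V}

theorem cutWeight_mono (hX : X ⊆ X') (hY : Y ⊆ Y') : cutWeight w X Y ≤ cutWeight w X' Y' :=
  (Finset.sum_le_sum fun _ _ => Finset.sum_le_sum_of_subset hY).trans
    (Finset.sum_le_sum_of_subset hX)

variable [DecidableEq V]

theorem MinCutAtLeast.subset_or_subset_or_le_cutWeight (hC : MinCutAtLeast w τ C)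
    (hXY : C ⊆ X ∪ Y) : C ⊆ X ∨ C ⊆ Y ∨ τ ≤ cutWeight w X Y := by
  have hsdiff : C \ X ⊆ Y := sdiff_le_iff.2 hXY
  rcases (C \ X).eq_empty_or_nonempty with hCX | hCX
  · exact Or.inl (Finset.sdiff_eq_empty_iff_subset.1 hCX)
  rcases (C ∩ X).eq_empty_or_nonempty with hCX' | hCX'
  · have hdisj : Disjoint C X := Finset.disjoint_iff_inter_eq_empty.2 hCX'
    exact Or.inr (Or.inl (Finset.sdiff_eq_self_of_disjoint hdisj ▸ hsdiff))
  · have hcut := hC (C ∩ X) Finset.inter_subset_left hCX'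
    rw [Finset.sdiff_inter_self_left] at hcut
    exact Or.inr (Or.inr ((hcut hCX).trans (cutWeight_mono Finset.inter_subset_right hsdiff)))

theorem mincut_of_combination_general (hA : MinCutAtLeast w τ A) (hB : MinCutAtLeast w τ B)
    (hAB : τ ≤ cutWeight w A B) (hBA : τ ≤ cutWeight w B A) : MinCutAtLeast w τ (A ∪ B) := by
  intro X hX hXne hYne
  have hcover : A ∪ B ⊆ X ∪ ((A ∪ B) \ X) := (Finset.union_sdiff_of_subset hX).ge
  obtain ⟨hAcover, hBcover⟩ := Finset.union_subset_iff.1 hcover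
  rcases hA.subset_or_subset_or_le_cutWeight hAcover with hAX | hAY | hcut
  · rcases hB.subset_or_subset_or_le_cutWeight hBcover with hBX | hBY | hcut
    · exact absurd (Finset.sdiff_eq_empty_iff_subset.2 (Finset.union_subset hAX hBX)) hYne.ne_empty
    · exact hAB.trans (cutWeight_mono hAX hBY)
    · exact hcut
  · rcases hB.subset_or_subset_or_le_cutWeight hBcover with hBX | hBY | hcut
    · exact hBA.trans (cutWeight_mono hBX hAY)
    · have hXY : X ⊆ (A ∪ B) \ X := hX.trans (Finset.union_subset hAY hBY)
      exact absurd (Finset.sdiff_disjoint.eq_bot_of_ge hXY) hXne.ne_empty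
    · exact hcut
  · exact hcut

end WeightedGraph

namespace TA

variable {S : Type} {Γ : System S} {α β γ : PosAsm S} {u v x : ℤ × ℤ}

theorem notMem_dom_iff : x ∉ dom α ↔ α.tiles x = none :=
  not_not

theorem mem_dom_congr (h : α.tiles x = β.tiles x) : x ∈ dom α ↔ x ∈ dom β :=
  not_congr (Eq.congr_left h)

theorem edgeW_comm (Γ : System S) (α : PosAsm S) (u v : ℤ × ℤ) :
    edgeW Γ α u v = edgeW Γ α v u := by
  obtain ⟨a, b⟩ := u
  obtain ⟨c, d⟩ := v
  unfold edgeW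
  cases α.tiles (a, b) <;> cases α.tiles (c, d) <;> simp only [Prod.mk_add_mk, Prod.mk.injEq]
  -- At most one of the four adjacency tests holds, so the order of testing does not matter.
  split_ifs <;> first | rfl | omega

theorem edgeW_eq_zero_of_notMem_right (hv : v ∉ dom α) : edgeW Γ α u v = 0 := by
  unfold edgeW
  rw [notMem_dom_iff.1 hv]
  cases α.tiles u <;> rfl

theorem edgeW_eq_zero_of_notMem_left (hu : u ∉ dom α) : edgeW Γ α u v = 0 :=
  (edgeW_comm Γ α u v).trans (edgeW_eq_zero_of_notMem_right hu)

theorem edgeW_congr (hu : α.tiles u = β.tiles u) (hv : α.tiles v = β.tiles v) :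
    edgeW Γ α u v = edgeW Γ β u v := by
  unfold edgeW
  rw [hu, hv]

/-- The tiles of `α` as a finite vertex set, so that finite cut weights apply to its bond graph. -/
noncomputable def domFinset (α : PosAsm S) : Finset (ℤ × ℤ) :=
  α.finite.toFinset

theorem mem_domFinset : x ∈ domFinset α ↔ x ∈ dom α :=
  α.finite.mem_toFinset

theorem crossW_eq_cutWeight {X Y : Set (ℤ × ℤ)} {F G : Finset (ℤ × ℤ)}
    (hX : ∀ x ∈ dom α, x ∈ X ↔ x ∈ F) (hY : ∀ x ∈ dom α, x ∈ Y ↔ x ∈ G) :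
    crossW Γ α X Y = cutWeight (edgeW Γ α) F G := by
  have hinner (u : ℤ × ℤ) : ∑ᶠ v ∈ Y, edgeW Γ α u v = ∑ v ∈ G, edgeW Γ α u v :=
    finsum_cond_eq_sum_of_cond_iff _ fun {v} hne =>
      hY v (not_imp_comm.1 edgeW_eq_zero_of_notMem_right hne)
  simp only [crossW, cutWeight, hinner]
  refine finsum_cond_eq_sum_of_cond_iff _ fun {u} hne => hX u ?_
  by_contra hu
  exact hne (Finset.sum_eq_zero fun v _ => edgeW_eq_zero_of_notMem_left hu)

theorem stable_iff_minCutAtLeast :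
    Stable Γ α ↔ MinCutAtLeast (edgeW Γ α) Γ.τ (domFinset α) := by
  classical
  constructor
  · rintro hα X hX ⟨x, hx⟩ ⟨y, hy⟩
    rw [Finset.mem_sdiff, mem_domFinset] at hy
    have hcross : crossW Γ α X (↑X)ᶜ = cutWeight (edgeW Γ α) X (domFinset α \ X) :=
      crossW_eq_cutWeight (by simp) (by simp +contextual [mem_domFinset])
    exact hcross ▸ hα X ⟨x, mem_domFinset.1 (hX hx), hx⟩ ⟨y, hy⟩
  · rintro hα X ⟨x, hx⟩ ⟨y, hy⟩
    have hcross : crossW Γ α X Xᶜ = cutWeight (edgeW Γ α) ((domFinset α).filter (· ∈ X))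
        (domFinset α \ (domFinset α).filter (· ∈ X)) :=
      crossW_eq_cutWeight (by simp +contextual [mem_domFinset])
        (by simp +contextual [mem_domFinset])
    rw [hcross]
    refine hα _ (Finset.filter_subset _ _) ⟨x, ?_⟩ ⟨y, ?_⟩
    · simpa [mem_domFinset] using hx
    · simp [mem_domFinset, hy.1, hy.2]

theorem union_tiles_of_mem_left (hx : x ∈ dom α) : (union α β).tiles x = α.tiles x := by
  obtain ⟨a, ha⟩ := Option.ne_none_iff_exists'.1 hx
  simp only [union, ha]

theorem union_tiles_of_notMem_left (hx : x ∉ dom α) : (union α β).tiles x = β.tiles x := by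
  simp only [union, notMem_dom_iff.1 hx]

theorem domFinset_union (α β : PosAsm S) :
    domFinset (union α β) = domFinset α ∪ domFinset β := by
  ext x
  rw [Finset.mem_union, mem_domFinset, mem_domFinset, mem_domFinset]
  by_cases hx : x ∈ dom α
  · rw [mem_dom_congr (union_tiles_of_mem_left hx)]
    exact iff_of_true hx (Or.inl hx)
  · rw [mem_dom_congr (union_tiles_of_notMem_left hx)]
    exact (or_iff_right hx).symm

theorem Stable.minCutAtLeast_edgeW (hα : Stable Γ α)
    (hγ : ∀ x ∈ dom α, α.tiles x = γ.tiles x) :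
    MinCutAtLeast (edgeW Γ γ) Γ.τ (domFinset α) := by
  intro X hX hXne hYne
  have hsub (x : ℤ × ℤ) (hx : x ∈ domFinset α) : α.tiles x = γ.tiles x :=
    hγ x (mem_domFinset.1 hx)
  refine (stable_iff_minCutAtLeast.1 hα X hX hXne hYne).trans_eq ?_
  exact Finset.sum_congr rfl fun u hu => Finset.sum_congr rfl fun v hv =>
    edgeW_congr (hsub u (hX hu)) (hsub v (Finset.mem_sdiff.1 hv).1)

theorem Stable.of_combines (hα : Stable Γ α) (hβ : Stable Γ β) (hγ : Combines Γ α β γ) :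
    Stable Γ γ := by
  obtain ⟨hdisj, rfl, hborder⟩ := hγ
  have hcutα : MinCutAtLeast (edgeW Γ (union α β)) Γ.τ (domFinset α) :=
    hα.minCutAtLeast_edgeW fun x hx => (union_tiles_of_mem_left hx).symm
  have hcutβ : MinCutAtLeast (edgeW Γ (union α β)) Γ.τ (domFinset β) :=
    hβ.minCutAtLeast_edgeW fun x hx =>
      (union_tiles_of_notMem_left (Set.disjoint_right.1 hdisj hx)).symm
  have hcross : crossW Γ (union α β) (dom α) (dom β) =
      cutWeight (edgeW Γ (union α β)) (domFinset α) (domFinset β) :=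
    crossW_eq_cutWeight (fun _ _ => mem_domFinset.symm) (fun _ _ => mem_domFinset.symm)
  rw [hcross] at hborder
  rw [stable_iff_minCutAtLeast, domFinset_union]
  exact mincut_of_combination_general hcutα hcutβ hborder
    (cutWeight_comm (edgeW_comm Γ _) _ _ ▸ hborder)

end TA

theorem mincut_of_combination :
    GraphMinCutOfPartitionClaim ∧ CombinableStableClaim := by
  refine ⟨fun V _ _ τ _ w hw A B _ _ _ hunion hA hB hAB X => ?_,
    fun S Γ _ α β γ hα hβ hγ => hα.of_combines hβ hγ⟩
  have hBA : τ ≤ cutWeight w B A := cutWeight_comm hw A B ▸ hAB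
  have hcut : MinCutAtLeast w τ (A ∪ B) := mincut_of_combination_general hA hB hAB hBA
  rw [hunion] at hcut
  exact hcut X X.subset_univ
end
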